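/- Let X_ρ be a modular space whose modular ρ satisfies the Δ₂-type condition with constant k > 0, and let T : X_ρ → X_ρ satisfy ρ(Tx − Ty) ≤ c·ρ(x − y) for all x, y ∈ X_ρ, where c ∈ [0,1) and c·k < 1/2. If ε > 0, n ≥ 1, and p ≥ 1 are such that ρ(T^{n−1}x − Tⁿx) < ε and ρ(Tⁿx − T^{n+p}x) < ε, then ρ(Tⁿx − T^{n+p+1}x) < ε. -/

import Mathlib

open Filter Topology ENNReal NNReal

variable {X : Type*} [AddCommGroup X] [Module ℝ X]

/-- A modular on a real vector space `X`. -/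
def IsModular (ρ : X → ℝ≥0∞) : Prop :=
  (∀ x : X, ρ x = 0 ↔ x = 0) ∧ (∀ x : X, ρ (-x) = ρ x) ∧
    (∀ x y : X, ∀ α β : ℝ, 0 ≤ α → 0 ≤ β → α + β = 1 →
      ρ (α • x + β • y) ≤ ρ x + ρ y)

/-- For `s ∈ (0,1]`, an `s`-convex modular on a real vector space `X`. -/
def IsSConvexModular (ρ : X → ℝ≥0∞) (s : ℝ) : Prop :=
  (∀ x : X, ρ x = 0 ↔ x = 0) ∧ (∀ x : X, ρ (-x) = ρ x) ∧
    (∀ x y : X, ∀ a b : ℝ, 0 ≤ a → 0 ≤ b → a ^ s + b ^ s = 1 →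
      ρ (a • x + b • y) ≤ ENNReal.ofReal (a ^ s) * ρ x + ENNReal.ofReal (b ^ s) * ρ y)

/-- The modular space `X_ρ = {x ∈ X : ρ(αx) → 0 as α → 0}`. -/
def modularSpace (ρ : X → ℝ≥0∞) : Set X :=
  {x : X | Tendsto (fun α : ℝ => ρ (α • x)) (𝓝 0) (𝓝 0)}

/-- `ρ`-convergence of a sequence to a point: `ρ(x_n − a) → 0`. -/
def RhoTendsto (ρ : X → ℝ≥0∞) (x : ℕ → X) (a : X) : Prop :=
  Tendsto (fun n => ρ (x n - a)) atTop (𝓝 0)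

/-- A sequence is `ρ`-Cauchy if `ρ(x_m − x_n) → 0` as `m, n → ∞`. -/
def RhoCauchy (ρ : X → ℝ≥0∞) (x : ℕ → X) : Prop :=
  Tendsto (fun p : ℕ × ℕ => ρ (x p.1 - x p.2)) (atTop ×ˢ atTop) (𝓝 0)

/-- `X_ρ` is `ρ`-complete if every `ρ`-Cauchy sequence in `X_ρ`
is `ρ`-convergent to a point of `X_ρ`. -/
def RhoComplete (ρ : X → ℝ≥0∞) : Prop :=
  ∀ x : ℕ → X, (∀ n, x n ∈ modularSpace ρ) → RhoCauchy ρ x →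
    ∃ a ∈ modularSpace ρ, RhoTendsto ρ x a

/-- The Fatou property of a modular. -/
def FatouProperty (ρ : X → ℝ≥0∞) : Prop :=
  ∀ (x y : ℕ → X) (a b : X), RhoTendsto ρ x a → RhoTendsto ρ y b →
    ρ (a - b) ≤ atTop.liminf (fun n => ρ (x n - y n))

/-- The `Δ₂`-type condition with constant `k`: `ρ(2x) ≤ k·ρ(x)` on `X_ρ`. -/
def Delta2Type (ρ : X → ℝ≥0∞) (k : ℝ≥0) : Prop :=
  ∀ x ∈ modularSpace ρ, ρ ((2 : ℝ) • x) ≤ (k : ℝ≥0∞) * ρ x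

/-- The `Δ₂`-condition: for sequences in `X_ρ`, `ρ(x_n) → 0` implies `ρ(2x_n) → 0`. -/
def Delta2Condition (ρ : X → ℝ≥0∞) : Prop :=
  ∀ x : ℕ → X, (∀ n, x n ∈ modularSpace ρ) →
    Tendsto (fun n => ρ (x n)) atTop (𝓝 0) →
      Tendsto (fun n => ρ ((2 : ℝ) • x n)) atTop (𝓝 0)

/-- The `F`-norm associated with a modular: `‖x‖_ρ = inf {t > 0 : ρ(x/t) ≤ t}`. -/
noncomputable def fnorm (ρ : X → ℝ≥0∞) (x : X) : ℝ :=
  sInf {t : ℝ | 0 < t ∧ ρ (t⁻¹ • x) ≤ ENNReal.ofReal t}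

/-! The `Δ₂`-type condition undoes the factor `1/2` in `ρ ((u + v) / 2) ≤ ρ u + ρ v`, so `ρ`
satisfies the triangle inequality up to the factor `k` on `X_ρ`. When `c * k ≤ 1/2`, multiplying
by `c` bounds the right-hand side by an average, hence by the maximum of the two terms. It remains
to apply the contraction to `T^[n - 1] x` and `T^[n + p] x`, with `T^[n] x` as the intermediate
point. -/

theorem smul_mem_modularSpace {ρ : X → ℝ≥0∞} {x : X} (hx : x ∈ modularSpace ρ) (r : ℝ) :
    r • x ∈ modularSpace ρ := by
  have hmul : Tendsto (fun α : ℝ => α * r) (𝓝 0) (𝓝 0) := by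
    simpa only [zero_mul] using (continuous_mul_const r).tendsto 0
  simpa only [modularSpace, Set.mem_ofPred_eq, Function.comp_def, mul_smul] using
    Tendsto.comp hx hmul

namespace IsModular

variable {ρ : X → ℝ≥0∞} {x y : X}

theorem half_smul_add_le (hρ : IsModular ρ) (x y : X) :
    ρ ((2⁻¹ : ℝ) • (x + y)) ≤ ρ x + ρ y := by
  rw [smul_add]
  exact hρ.2.2 x y _ _ (by norm_num) (by norm_num) (by norm_num)

theorem add_mem_modularSpace (hρ : IsModular ρ) (hx : x ∈ modularSpace ρ)
    (hy : y ∈ modularSpace ρ) : x + y ∈ modularSpace ρ := by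
  have hsum : Tendsto (fun α : ℝ => ρ (α • (2 : ℝ) • x) + ρ (α • (2 : ℝ) • y)) (𝓝 0) (𝓝 0) := by
    simpa only [add_zero] using
      Tendsto.add (smul_mem_modularSpace hx 2) (smul_mem_modularSpace hy 2)
  refine tendsto_of_tendsto_of_tendsto_of_le_of_le tendsto_const_nhds hsum
    (fun _ => zero_le) fun α => ?_
  calc ρ (α • (x + y)) = ρ ((2⁻¹ : ℝ) • (α • (2 : ℝ) • x + α • (2 : ℝ) • y)) := by
        congr 1; module
    _ ≤ ρ (α • (2 : ℝ) • x) + ρ (α • (2 : ℝ) • y) := hρ.half_smul_add_le _ _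

theorem sub_mem_modularSpace (hρ : IsModular ρ) (hx : x ∈ modularSpace ρ)
    (hy : y ∈ modularSpace ρ) : x - y ∈ modularSpace ρ := by
  rw [sub_eq_add_neg, ← neg_one_smul ℝ y]
  exact hρ.add_mem_modularSpace hx (smul_mem_modularSpace hy (-1))

end IsModular

theorem mul_add_le_max_of_le_inv_two {a : ℝ≥0∞} (ha : a ≤ 2⁻¹) (b d : ℝ≥0∞) :
    a * (b + d) ≤ max b d :=
  calc a * (b + d) ≤ 2⁻¹ * (max b d + max b d) := by
        gcongr
        exacts [le_max_left b d, le_max_right b d]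
    _ = max b d := by
        rw [← two_mul, ENNReal.inv_mul_cancel_left two_ne_zero ofNat_ne_top]

namespace Delta2Type

variable {ρ : X → ℝ≥0∞} {k : ℝ≥0}

theorem map_add_le_mul (hΔ : Delta2Type ρ k) (hρ : IsModular ρ) {x y : X}
    (hxy : x + y ∈ modularSpace ρ) : ρ (x + y) ≤ k * (ρ x + ρ y) :=
  calc ρ (x + y) = ρ ((2 : ℝ) • (2⁻¹ : ℝ) • (x + y)) := by
        rw [smul_inv_smul₀ two_ne_zero]
    _ ≤ k * ρ ((2⁻¹ : ℝ) • (x + y)) := hΔ _ (smul_mem_modularSpace hxy _)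
    _ ≤ k * (ρ x + ρ y) := by gcongr; exact hρ.half_smul_add_le x y

theorem mul_map_sub_le_max (hΔ : Delta2Type ρ k) (hρ : IsModular ρ) {c : ℝ≥0∞}
    (hck : c * k ≤ 2⁻¹) {u v : X} (hu : u ∈ modularSpace ρ) (hv : v ∈ modularSpace ρ) (w : X) :
    c * ρ (u - v) ≤ max (ρ (u - w)) (ρ (w - v)) := by
  have hsplit : ρ (u - v) ≤ k * (ρ (u - w) + ρ (w - v)) := by
    have huv := hρ.sub_mem_modularSpace hu hv
    rw [← sub_add_sub_cancel u w v] at huv ⊢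
    exact hΔ.map_add_le_mul hρ huv
  calc c * ρ (u - v) ≤ c * (k * (ρ (u - w) + ρ (w - v))) := by gcongr
    _ = c * k * (ρ (u - w) + ρ (w - v)) := (mul_assoc _ _ _).symm
    _ ≤ max (ρ (u - w)) (ρ (w - v)) := mul_add_le_max_of_le_inv_two hck _ _

end Delta2Type

/-- Inductive step of the Cauchy argument: under the Δ₂-type
condition with `c·k < 1/2`, control of two consecutive gaps propagates. -/
theorem picard_gap_induction_step (ρ : X → ℝ≥0∞) (hmod : IsModular ρ)
    (k : ℝ≥0) (hk : 0 < k) (hΔ : Delta2Type ρ k)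
    (T : X → X) (hT : ∀ x ∈ modularSpace ρ, T x ∈ modularSpace ρ)
    (c : ℝ≥0) (hc : c < 1) (hck : (c : ℝ) * k < 1 / 2)
    (hcontr : ∀ x ∈ modularSpace ρ, ∀ y ∈ modularSpace ρ,
      ρ (T x - T y) ≤ (c : ℝ≥0∞) * ρ (x - y))
    (x : X) (hx : x ∈ modularSpace ρ)
    (ε : ℝ≥0∞) (hε : 0 < ε) (n p : ℕ) (hn : 1 ≤ n) (hp : 1 ≤ p)
    (h1 : ρ (T^[n - 1] x - T^[n] x) < ε)
    (h2 : ρ (T^[n] x - T^[n + p] x) < ε) :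
    ρ (T^[n] x - T^[n + p + 1] x) < ε := by
  have hiter (m : ℕ) : T^[m] x ∈ modularSpace ρ := Set.MapsTo.iterate hT m hx
  have hck_half : (c : ℝ≥0∞) * k ≤ 2⁻¹ := by
    have hck_nnreal : c * k ≤ 2⁻¹ := by
      rw [← NNReal.coe_le_coe]
      simpa using hck.le
    simpa using ENNReal.coe_le_coe.2 hck_nnreal
  have hsucc : T^[n] x = T (T^[n - 1] x) := by
    rw [← Function.iterate_succ_apply' T, Nat.succ_eq_add_one, Nat.sub_add_cancel hn]
  calc ρ (T^[n] x - T^[n + p + 1] x)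
      = ρ (T (T^[n - 1] x) - T (T^[n + p] x)) := by
        rw [hsucc, Function.iterate_succ_apply']
    _ ≤ c * ρ (T^[n - 1] x - T^[n + p] x) := hcontr _ (hiter _) _ (hiter _)
    _ ≤ max (ρ (T^[n - 1] x - T^[n] x)) (ρ (T^[n] x - T^[n + p] x)) :=
        hΔ.mul_map_sub_le_max hmod hck_half (hiter _) (hiter _) _
    _ < ε := max_lt h1 h2
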